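/- (Proposition 1, policy space.) Let β_w, β_l > 0 and P_w, P_l, R_w, R_l > 0 be real numbers. Let d_w be the derivative at P_w of P ↦ −log σ(β_w·log(P/R_w) − β_l·log(P_l/R_l)), and let d_l be the derivative at P_l of P ↦ −log σ(β_w·log(P_w/R_w) − β_l·log(P/R_l)). Then |d_w| = |d_l| if and only if β_w / β_l = P_w / P_l. -/

import Mathlib

/-!
The loss `t ↦ -log σ(t)` has derivative `-σ(-t)`, which never vanishes. By the chain rule both
partial derivatives carry this same factor, evaluated at the common margin `Δ`:
`d_w = -σ(-Δ) * (βw / Pw)` and `d_l = σ(-Δ) * (βl / Pl)`. Taking absolute values and cancelling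
`σ(-Δ) > 0` leaves `βw / Pw = βl / Pl`, which is the claimed equality of ratios.
-/

/-- The logistic sigmoid σ(t) = 1/(1 + exp(−t)). -/
noncomputable def sigmoid (t : ℝ) : ℝ := 1 / (1 + Real.exp (-t))

lemma sigmoid_pos' (t : ℝ) : 0 < sigmoid t := by
  unfold sigmoid
  positivity

lemma hasDerivAt_neg_log_sigmoid (t : ℝ) :
    HasDerivAt (fun t : ℝ => -Real.log (sigmoid t)) (-sigmoid (-t)) t := by
  have hfun : (fun t : ℝ => -Real.log (sigmoid t)) =
      fun t : ℝ => Real.log (1 + Real.exp (-t)) := by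
    funext s
    simp [sigmoid, Real.log_inv]
  rw [hfun]
  have hpos : 1 + Real.exp (-t) ≠ 0 := by positivity
  have h := (((hasDerivAt_id t).neg.exp).const_add 1).log hpos
  refine h.congr_deriv ?_
  have he : Real.exp (-t) * Real.exp t = 1 := by rw [← Real.exp_add]; simp
  have hpos' : 1 + Real.exp t ≠ 0 := by positivity
  simp only [sigmoid, neg_neg, id, Pi.neg_apply]
  field_simp
  linear_combination -he

lemma hasDerivAt_mul_log_div (β : ℝ) {P R : ℝ} (hP : 0 < P) (hR : 0 < R) :
    HasDerivAt (fun P : ℝ => β * Real.log (P / R)) (β / P) P := by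
  have h := (((hasDerivAt_id P).div_const R).log (div_pos hP hR).ne').const_mul β
  refine h.congr_deriv ?_
  simp only [id]
  field_simp

/-- Proposition 1, policy space: `|d_w| = |d_l|` iff
`β_w / β_l = P_w / P_l`. -/
theorem adadpo_balance_policy_iff (βw βl Pw Pl Rw Rl : ℝ) (hβw : 0 < βw) (hβl : 0 < βl)
    (hPw : 0 < Pw) (hPl : 0 < Pl) (hRw : 0 < Rw) (hRl : 0 < Rl) :
    (|deriv (fun P : ℝ =>
        -Real.log (sigmoid (βw * Real.log (P / Rw) - βl * Real.log (Pl / Rl)))) Pw| =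
     |deriv (fun P : ℝ =>
        -Real.log (sigmoid (βw * Real.log (Pw / Rw) - βl * Real.log (P / Rl)))) Pl|)
    ↔ βw / βl = Pw / Pl := by
  have hw := (hasDerivAt_neg_log_sigmoid
    (βw * Real.log (Pw / Rw) - βl * Real.log (Pl / Rl))).comp Pw
    ((hasDerivAt_mul_log_div βw hPw hRw).sub_const (βl * Real.log (Pl / Rl)))
  have hl := (hasDerivAt_neg_log_sigmoid
    (βw * Real.log (Pw / Rw) - βl * Real.log (Pl / Rl))).comp Pl
    ((hasDerivAt_mul_log_div βl hPl hRl).const_sub (βw * Real.log (Pw / Rw)))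
  have hs := sigmoid_pos' (-(βw * Real.log (Pw / Rw) - βl * Real.log (Pl / Rl)))
  simp only [Function.comp_def] at hw hl
  rw [hw.deriv, hl.deriv, abs_mul, abs_mul, abs_neg, abs_neg, abs_of_pos hs,
    abs_of_pos (div_pos hβw hPw), abs_of_pos (div_pos hβl hPl), mul_right_inj' hs.ne',
    div_eq_div_iff hPw.ne' hPl.ne', div_eq_div_iff hβl.ne' hPl.ne', mul_comm βl Pw]
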